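/- $\sum_{n=1}^{\infty} \frac{1}{n^2 \binom{2n}{n}}\left(24 \sum_{j=1}^{n-1} \frac{(-1)^j}{j^3} + \frac{7(-1)^n}{n^3}\right) = 7\,\zeta(5) - \pi^2 \zeta(3)$. -/

import Mathlib

open Filter Topology

/-- Alternating harmonic-type sum `∑_{j=1}^n (-1)^j / j^s`. -/
noncomputable def A (s n : ℕ) : ℝ := ∑ j ∈ Finset.range n, (-1:ℝ)^(j+1) / ((j:ℝ) + 1) ^ s

/-- The Riemann zeta value `ζ(s) = ∑_{n ≥ 1} 1/n^s`. -/
noncomputable def zeta (s : ℕ) : ℝ := ∑' n : ℕ, 1 / ((n:ℝ) + 1) ^ s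

/-!
Iterating `J_n + J_{n + 1} = ∫_0^1 s ^ n log² s ds` for `J_n = ∫_0^1 s ^ n log² s / (1 + s) ds`
expresses the alternating sums `A 3 n` through `J_n - (-1) ^ n J_0`. The constant `J_0` is
`3 / 2 * ζ(3)`, and `∑ 1 / (n ^ 2 * (2 n).choose n) = π ^ 2 / 18`, which accounts for `π ^ 2 ζ(3)`.
In the rest, summing under the integral with
`∑ (-s) ^ n / (n ^ 2 * (2 n).choose n) = -2 arsinh(√s / 2) ^ 2` leaves
`∫_0^1 log² s arsinh(√s / 2) ^ 2 (17 / s - 24 / (1 + s)) ds`, and this equals `7 ζ(5)`: after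
`s = t ^ 2 / (1 - t)` both logarithms are linear in `log t` and `log (1 - t)`, and the integrand has
a primitive built from `∫ log⁴ dlog Φ`, with `Φ` cyclotomic, at monomials in `t` and `1 - t`. At
the end point, the inverse golden ratio, `1 - t = t ^ 2` turns these into powers of `t`, and the
inversion and distribution relations cancel all but multiples of `ζ(5)`.
-/

namespace AperyLike

open Asymptotics MeasureTheory Polynomial Real Set

/-- The integrands `h` on `(0, ∞)` for which `x ↦ ∫ s in 0..x, h s` is a primitive of `h`:
continuous on `(0, ∞)` and integrable near `0`. -/
structure IsPrimitivable (h : ℝ → ℝ) : Prop where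
  continuousOn : ContinuousOn h (Ioi 0)
  integrableAtFilter : IntegrableAtFilter h (𝓝[>] 0)

namespace IsPrimitivable

variable {h : ℝ → ℝ} {x t : ℝ}

lemma intervalIntegrable (hh : IsPrimitivable h) (hx : 0 < x) :
    IntervalIntegrable h volume 0 x := by
  obtain ⟨u, hu, hint⟩ := hh.integrableAtFilter
  obtain ⟨ε, hε, hεu⟩ := mem_nhdsGT_iff_exists_Ioc_subset.1 hu
  have near_zero : IntervalIntegrable h volume 0 ε :=
    (intervalIntegrable_iff_integrableOn_Ioc_of_le hε.le).2 (hint.mono_set hεu)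
  refine near_zero.trans (hh.continuousOn.mono fun y hy => ?_).intervalIntegrable
  exact (lt_min hε hx).trans_le hy.1

lemma continuousOn_integral (hh : IsPrimitivable h) :
    ContinuousOn (fun x => ∫ s in (0 : ℝ)..x, h s) (Ici 0) := by
  intro x hx
  have hx0 : (0 : ℝ) ≤ x := hx
  have hcont := intervalIntegral.continuousOn_primitive_interval'
    (hh.intervalIntegrable (x := x + 1) (by positivity)) left_mem_uIcc
  rw [uIcc_of_le (by positivity)] at hcont
  refine (hcont x ⟨hx0, by linarith⟩).mono_of_mem_nhdsWithin ?_
  filter_upwards [self_mem_nhdsWithin, mem_nhdsWithin_of_mem_nhds (Iic_mem_nhds (lt_add_one x))]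
    with y h0 h1
  exact ⟨h0, h1⟩

lemma hasDerivAt_integral (hh : IsPrimitivable h) (hx : 0 < x) :
    HasDerivAt (fun x => ∫ s in (0 : ℝ)..x, h s) (h x) x :=
  intervalIntegral.integral_hasDerivAt_right (hh.intervalIntegrable hx)
    (hh.continuousOn.stronglyMeasurableAtFilter isOpen_Ioi x hx)
    (hh.continuousOn.continuousAt (Ioi_mem_nhds hx))

lemma hasDerivAt_integral_pow_mul_zpow (hh : IsPrimitivable h) (i : ℕ) (j : ℤ)
    (ht : t ∈ Ioo (0 : ℝ) 1) :
    HasDerivAt (fun t => ∫ s in (0 : ℝ)..t ^ i * (1 - t) ^ j, h s)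
      (h (t ^ i * (1 - t) ^ j) * (t ^ i * (1 - t) ^ j * (i / t - j / (1 - t)))) t := by
  have h0 : 0 < t := ht.1
  have h1 : 0 < 1 - t := sub_pos.2 ht.2
  have hsub : HasDerivAt (fun t : ℝ => 1 - t) (-1) t := by
    simpa using (hasDerivAt_id t).const_sub 1
  have hzpow : HasDerivAt (fun t : ℝ => (1 - t) ^ j) (j * (1 - t) ^ (j - 1) * -1) t :=
    (hasDerivAt_zpow j (1 - t) (.inl h1.ne')).comp t hsub
  have harg : HasDerivAt (fun t : ℝ => t ^ i * (1 - t) ^ j)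
      (t ^ i * (1 - t) ^ j * (i / t - j / (1 - t))) t := by
    refine ((hasDerivAt_pow i t).mul hzpow).congr_deriv ?_
    rw [zpow_sub_one₀ h1.ne']
    rcases i with _ | i
    · simp only [CharP.cast_eq_zero, zero_tsub, pow_zero, mul_one, zero_mul, mul_neg, one_mul,
        zero_add, zero_div, zero_sub, neg_inj]
      field_simp
    · rw [Nat.add_sub_cancel]
      field_simp
      ring
  exact (hh.hasDerivAt_integral (by positivity)).comp t harg

lemma continuousOn_integral_pow_mul_zpow (hh : IsPrimitivable h) (i : ℕ) (j : ℤ) :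
    ContinuousOn (fun t => ∫ s in (0 : ℝ)..t ^ i * (1 - t) ^ j, h s) (Ico 0 1) := by
  have hpos : ∀ t ∈ Ico (0 : ℝ) 1, 0 < 1 - t := fun t ht => sub_pos.2 ht.2
  refine hh.continuousOn_integral.comp (t := Ici 0) ?_ fun t ht =>
    mul_nonneg (pow_nonneg ht.1 i) (zpow_nonneg (hpos t ht).le j)
  exact (continuousOn_id.pow i).mul
    ((continuousOn_const.sub continuousOn_id).zpow₀ j fun t ht => .inl (hpos t ht).ne')

end IsPrimitivable

lemma isLittleO_log_pow_rpow_nhdsGT_zero (k : ℕ) {r : ℝ} (hr : r < 0) :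
    (fun s => log s ^ k) =o[𝓝[>] 0] fun s => s ^ r := by
  refine (isLittleO_abs_log_rpow_rpow_nhdsGT_zero k hr).congr_left (fun s => ?_) |>.of_abs_left
  simp [rpow_natCast]

lemma isPrimitivable_log_pow_mul (k : ℕ) {g : ℝ → ℝ}
    (hc : ContinuousOn (fun s => log s ^ k * g s) (Ioi 0)) (hg : g =O[𝓝[>] 0] (1 : ℝ → ℝ)) :
    IsPrimitivable fun s => log s ^ k * g s := by
  refine ⟨hc, ?_⟩
  have hO : (fun s => log s ^ k * g s) =O[𝓝[>] 0] fun s : ℝ => s ^ (-(1 / 2) : ℝ) := by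
    have hr : -(1 / 2 : ℝ) < 0 := by norm_num
    simpa using (isLittleO_log_pow_rpow_nhdsGT_zero k hr).isBigO.mul hg
  have hint : IntervalIntegrable (fun s : ℝ => s ^ (-(1 / 2) : ℝ)) volume 0 1 :=
    intervalIntegral.intervalIntegrable_rpow' (by norm_num)
  refine hO.integrableAtFilter ⟨Ioi 0, self_mem_nhdsWithin, ?_⟩ ⟨Ioc 0 1, ?_, ?_⟩
  · exact hc.aestronglyMeasurable measurableSet_Ioi
  · exact Ioc_mem_nhdsGT one_pos
  · exact (intervalIntegrable_iff_integrableOn_Ioc_of_le zero_le_one).1 hint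

lemma isPrimitivable_log_pow_mul_of_continuousOn (k : ℕ) {g : ℝ → ℝ}
    (hg : ContinuousOn g (Ici 0)) :
    IsPrimitivable fun s => log s ^ k * g s := by
  refine isPrimitivable_log_pow_mul k ?_ ?_
  · have hlog : ContinuousOn log (Ioi 0) := continuousOn_log.mono fun s hs => ne_of_gt hs
    exact (hlog.pow k).mul (hg.mono Ioi_subset_Ici_self)
  · exact ((hg 0 self_mem_Ici).mono Ioi_subset_Ici_self).tendsto.isBigO_one ℝ

lemma intervalIntegrable_pow_mul_log_pow (n k : ℕ) :
    IntervalIntegrable (fun s => s ^ n * log s ^ k) volume 0 1 := by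
  simpa only [mul_comm] using (isPrimitivable_log_pow_mul_of_continuousOn k
    (continuous_pow n).continuousOn).intervalIntegrable one_pos

lemma continuousOn_pow_succ_mul_log_pow (n k : ℕ) :
    ContinuousOn (fun s => s ^ (n + 1) * log s ^ k) (Ici 0) := by
  intro s hs
  rcases (show (0 : ℝ) ≤ s from hs).eq_or_lt with rfl | hpos
  · have hlim : Tendsto (fun s : ℝ => s * log s ^ k) (𝓝[>] 0) (𝓝 0) := by
      have hlog := isLittleO_log_pow_rpow_nhdsGT_zero k (neg_one_lt_zero (R := ℝ))
      refine hlog.tendsto_div_nhds_zero.congr fun s => ?_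
      rw [rpow_neg_one, div_inv_eq_mul, mul_comm]
    have hpow : Tendsto (fun s : ℝ => s ^ n) (𝓝[>] 0) (𝓝 (0 ^ n)) :=
      ((continuous_pow n).tendsto 0).mono_left nhdsWithin_le_nhds
    rw [← Ioi_insert, continuousWithinAt_insert_self, ContinuousWithinAt]
    simpa [pow_succ, mul_assoc] using hpow.mul hlim
  · have := hpos.ne'
    exact ContinuousAt.continuousWithinAt (by fun_prop (disch := assumption))

lemma integral_pow_mul_log_pow (n k : ℕ) :
    ∫ s in (0 : ℝ)..1, s ^ n * log s ^ k = (-1) ^ k * k.factorial / (n + 1) ^ (k + 1) := by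
  induction k with
  | zero => simp
  | succ k ih =>
    have hderiv : ∀ s ∈ Ioo (0 : ℝ) 1, HasDerivAt (fun s => s ^ (n + 1) * log s ^ (k + 1))
        ((n + 1) * (s ^ n * log s ^ (k + 1)) + (k + 1) * (s ^ n * log s ^ k)) s := by
      intro s hs
      have hs0 : s ≠ 0 := hs.1.ne'
      refine ((hasDerivAt_pow (n + 1) s).mul ((hasDerivAt_log hs0).pow (k + 1))).congr_deriv ?_
      simp only [Nat.add_sub_cancel, Pi.pow_apply]
      push_cast
      field_simp
      ring
    have hint := fun j => intervalIntegrable_pow_mul_log_pow n j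
    have parts := intervalIntegral.integral_eq_sub_of_hasDerivAt_of_le zero_le_one
      ((continuousOn_pow_succ_mul_log_pow n (k + 1)).mono Icc_subset_Ici_self) hderiv
      (((hint (k + 1)).const_mul _).add ((hint k).const_mul _))
    rw [intervalIntegral.integral_add ((hint (k + 1)).const_mul _) ((hint k).const_mul _),
      intervalIntegral.integral_const_mul, intervalIntegral.integral_const_mul, ih] at parts
    simp only [log_one, zero_pow k.succ_ne_zero, zero_pow n.succ_ne_zero, mul_zero, zero_mul,
      sub_zero] at parts
    rw [Nat.factorial_succ, pow_succ (-1 : ℝ) k]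
    push_cast
    field_simp at parts ⊢
    linear_combination parts

/-! ### Polylogarithmic integrals -/

/-- The density of the differential form `log ^ k s * dlog f(s)`. -/
noncomputable def dlogForm (k : ℕ) (f : ℝ[X]) (s : ℝ) : ℝ :=
  log s ^ k * (f.derivative.eval s / f.eval s)

/-- The iterated-integral function `L_k f(x) = ∫_0^x log ^ k s * dlog f(s)`, which for cyclotomic
polynomials `f` plays the role of the polylogarithm of weight `k + 1`. -/
noncomputable def dlogIntegral (k : ℕ) (f : ℝ[X]) (x : ℝ) : ℝ :=
  ∫ s in (0 : ℝ)..x, dlogForm k f s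

section DlogIntegral

variable {k : ℕ} {f g : ℝ[X]} {x : ℝ}

lemma isPrimitivable_dlogForm (k : ℕ) (hf : ∀ s, 0 ≤ s → f.eval s ≠ 0) :
    IsPrimitivable (dlogForm k f) :=
  isPrimitivable_log_pow_mul_of_continuousOn k <|
    f.derivative.continuous.continuousOn.div f.continuous.continuousOn hf

-- The factor `log s` cancels the pole at `1`, and a second one absorbs the junk value there.
lemma isPrimitivable_dlogForm_one_sub_X (hk : 2 ≤ k) :
    IsPrimitivable (dlogForm k (1 - X)) := by
  obtain ⟨j, rfl⟩ := Nat.exists_eq_add_of_le hk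
  refine isPrimitivable_log_pow_mul _ ?_ ?_
  · have hlog : ContinuousOn log (Ioi 0) := continuousOn_log.mono fun s hs => ne_of_gt hs
    have hslope : ContinuousOn (dslope log 1) (Ioi 0) :=
      (continuousOn_dslope (Ioi_mem_nhds one_pos)).2 ⟨hlog, differentiableAt_log one_ne_zero⟩
    refine ((hlog.pow (j + 1)).mul hslope).congr fun s _ => ?_
    rcases eq_or_ne s 1 with rfl | hs
    · simp
    · have h1 : 1 - s ≠ 0 := sub_ne_zero.2 hs.symm
      have h2 : s - 1 ≠ 0 := sub_ne_zero.2 hs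
      change _ = log s ^ (j + 1) * dslope log 1 s
      simp only [dslope_of_ne _ hs, slope_def_field, log_one, sub_zero, eval_sub, eval_one, eval_X,
        derivative_sub, derivative_one, derivative_X, zero_sub, eval_neg]
      field_simp
      ring
  · have hcont : ContinuousAt (fun s : ℝ => (1 - X : ℝ[X]).derivative.eval s /
        (1 - X : ℝ[X]).eval s) 0 :=
      (Polynomial.continuousAt _).div (Polynomial.continuousAt _) (by simp)
    exact (hcont.tendsto.mono_left nhdsWithin_le_nhds).isBigO_one ℝ

@[simp]
lemma dlogIntegral_zero_right (k : ℕ) (f : ℝ[X]) : dlogIntegral k f 0 = 0 :=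
  intervalIntegral.integral_same

lemma dlogIntegral_mul (hf : IsPrimitivable (dlogForm k f)) (hg : IsPrimitivable (dlogForm k g))
    (hf0 : f ≠ 0) (hg0 : g ≠ 0) (hx : 0 < x) :
    dlogIntegral k (f * g) x = dlogIntegral k f x + dlogIntegral k g x := by
  have hroots : {s | (f * g).IsRoot s}.Finite := finite_setOfPred_isRoot (mul_ne_zero hf0 hg0)
  rw [dlogIntegral, dlogIntegral, dlogIntegral,
    ← intervalIntegral.integral_add (hf.intervalIntegrable hx) (hg.intervalIntegrable hx)]
  refine intervalIntegral.integral_congr_ae ?_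
  filter_upwards [measure_eq_zero_iff_ae_notMem.1 (hroots.measure_zero volume)] with s hs _
  obtain ⟨hfs, hgs⟩ : f.eval s ≠ 0 ∧ g.eval s ≠ 0 := by
    simpa [IsRoot, not_or] using hs
  simp only [dlogForm, derivative_mul, eval_add, eval_mul]
  field_simp

lemma dlogIntegral_expand (k : ℕ) (f : ℝ[X]) {m : ℕ} (hm : m ≠ 0) (hx : 0 ≤ x) :
    dlogIntegral k (expand ℝ m f) x = dlogIntegral k f (x ^ m) / m ^ k := by
  have hm0 : (m : ℝ) ≠ 0 := Nat.cast_ne_zero.2 hm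
  have himage : (fun s : ℝ => s ^ m) '' Ioc 0 x = Ioc 0 (x ^ m) := by
    ext y
    constructor
    · rintro ⟨s, hs, rfl⟩
      exact ⟨pow_pos hs.1 m, pow_le_pow_left₀ hs.1.le hs.2 m⟩
    · rintro ⟨hy0, hyx⟩
      obtain ⟨s, ⟨hs0, hsx⟩, rfl⟩ := intermediate_value_Icc hx (continuous_pow m).continuousOn
        ⟨by simpa [hm] using hy0.le, hyx⟩
      exact ⟨s, ⟨hs0.lt_of_ne (by rintro rfl; simp [hm] at hy0), hsx⟩, rfl⟩
  rw [dlogIntegral, dlogIntegral, intervalIntegral.integral_of_le hx,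
    intervalIntegral.integral_of_le (pow_nonneg hx m), ← himage,
    integral_image_eq_integral_abs_deriv_smul measurableSet_Ioc
      (fun s _ => (hasDerivAt_pow m s).hasDerivWithinAt)
      (fun s hs t ht h => (pow_left_inj₀ hs.1.le ht.1.le hm).1 h), ← integral_div]
  refine setIntegral_congr_fun measurableSet_Ioc fun s hs => ?_
  have hs0 : 0 < s := hs.1
  simp only [dlogForm, derivative_expand, eval_mul, eval_pow, eval_X, expand_eval, log_pow,
    mul_pow, eval_natCast, smul_eq_mul, abs_of_nonneg (by positivity : 0 ≤ (m : ℝ) * s ^ (m - 1))]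
  field_simp

lemma dlogIntegral_inv (hk : Even k) {d : ℕ} (hf : ∀ s, 0 ≤ s → f.eval s ≠ 0)
    (hpal : ∀ s, s ≠ 0 → f.eval s⁻¹ * s ^ d = f.eval s) (hx : 0 < x) :
    dlogIntegral k f x⁻¹ = dlogIntegral k f x - d * log x ^ (k + 1) / (k + 1) := by
  have hprim := isPrimitivable_dlogForm k hf
  have hderiv : ∀ s ∈ Ioi (0 : ℝ), HasDerivAt (fun s => dlogIntegral k f s⁻¹ -
      dlogIntegral k f s + d * log s ^ (k + 1) / (k + 1)) 0 s := by
    intro s hs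
    have hs0 : s ≠ 0 := ne_of_gt hs
    have hinv : 0 < s⁻¹ := inv_pos.2 hs
    have hrel : f.derivative.eval s⁻¹ * -(s ^ 2)⁻¹ * s ^ d + f.eval s⁻¹ * (d * s ^ (d - 1)) =
        f.derivative.eval s := by
      refine HasDerivAt.unique (((f.hasDerivAt s⁻¹).comp s (hasDerivAt_inv hs0)).mul
        (hasDerivAt_pow d s)) ((f.hasDerivAt s).congr_of_eventuallyEq ?_)
      filter_upwards [isOpen_ne.mem_nhds hs0] with y hy using hpal y hy
    refine ((((hprim.hasDerivAt_integral hinv).comp s (hasDerivAt_inv hs0)).sub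
      (hprim.hasDerivAt_integral hs)).add ((((hasDerivAt_log hs0).pow (k + 1)).const_mul
        (d : ℝ)).div_const (k + 1 : ℝ))).congr_deriv ?_
    have hfinv := hf _ hinv.le
    simp only [dlogForm, log_inv, hk.neg_pow, ← hrel, ← hpal s hs0, Nat.add_sub_cancel]
    generalize f.eval s⁻¹ = u at hfinv ⊢
    rcases d with _ | d
    · simp only [mul_neg, pow_zero, mul_one, CharP.cast_eq_zero, zero_tsub, mul_zero, add_zero,
        zero_mul, zero_div]
      field_simp
      simp
    · push_cast
      field_simp
      ring
  have hconst := isOpen_Ioi.is_const_of_deriv_eq_zero isPreconnected_Ioi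
    (fun s hs => (hderiv s hs).differentiableAt.differentiableWithinAt)
    (fun s hs => (hderiv s hs).deriv) (mem_Ioi.2 hx) (mem_Ioi.2 one_pos)
  simp only [inv_one, sub_self, log_one, zero_pow k.succ_ne_zero] at hconst
  linear_combination hconst

lemma hasSum_one_div_pow_zeta (hk : 1 < k) :
    HasSum (fun n : ℕ => 1 / ((n : ℝ) + 1) ^ k) (zeta k) := by
  refine Summable.hasSum ?_
  simpa using (summable_nat_add_iff 1).2 (summable_one_div_nat_pow.2 hk)

lemma dlogIntegral_one_sub_X_one (hk : 1 ≤ k) :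
    dlogIntegral k (1 - X) 1 = (-1) ^ (k + 1) * k.factorial * zeta (k + 1) := by
  have hval (n : ℕ) : ∫ s in Ioc (0 : ℝ) 1, s ^ n * log s ^ k =
      (-1) ^ k * k.factorial * (1 / ((n : ℝ) + 1) ^ (k + 1)) := by
    rw [← intervalIntegral.integral_of_le zero_le_one, integral_pow_mul_log_pow, mul_one_div]
  have hnorm (n : ℕ) : ∫ s in Ioc (0 : ℝ) 1, ‖s ^ n * log s ^ k‖ =
      k.factorial * (1 / ((n : ℝ) + 1) ^ (k + 1)) := by
    have habs : ∀ s ∈ Ioc (0 : ℝ) 1, ‖s ^ n * log s ^ k‖ = (-1) ^ k * (s ^ n * log s ^ k) := by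
      intro s hs
      rw [norm_mul, norm_pow, norm_pow, norm_of_nonneg hs.1.le,
        norm_of_nonpos (log_nonpos hs.1.le hs.2), neg_pow]
      ring
    rw [setIntegral_congr_fun measurableSet_Ioc habs, integral_const_mul, hval, ← mul_assoc,
      ← mul_assoc, ← mul_pow, neg_one_mul, neg_neg, one_pow, one_mul]
  have hzeta := hasSum_one_div_pow_zeta (Nat.lt_add_of_pos_left hk : 1 < k + 1)
  have hsum := hasSum_integral_of_summable_integral_norm (μ := volume.restrict (Ioc (0 : ℝ) 1))
    (F := fun (n : ℕ) s => s ^ n * log s ^ k)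
    (fun n => (intervalIntegrable_pow_mul_log_pow n k).1)
    (by simpa only [hnorm] using (hzeta.mul_left _).summable)
  simp only [hval] at hsum
  have hgeom : ∀ s ∈ Ioc (0 : ℝ) 1, dlogForm k (1 - X) s = -∑' n : ℕ, s ^ n * log s ^ k := by
    intro s hs
    rcases hs.2.eq_or_lt with rfl | hs1
    · simp [dlogForm, zero_pow (Nat.one_le_iff_ne_zero.1 hk)]
    · rw [tsum_mul_right, tsum_geometric_of_lt_one hs.1.le hs1]
      simp only [dlogForm, derivative_sub, derivative_one, derivative_X, zero_sub, eval_neg,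
        eval_one, eval_sub, eval_X]
      ring
  rw [dlogIntegral, intervalIntegral.integral_of_le zero_le_one,
    setIntegral_congr_fun measurableSet_Ioc hgeom, integral_neg,
    hsum.unique (hzeta.mul_left _)]
  ring

lemma one_sub_X_mul_one_add_X : (1 - X) * (1 + X) = expand ℝ 2 (1 - X) := by
  simp only [map_sub, map_one, expand_X]
  ring

lemma eval_one_add_X_ne_zero {s : ℝ} (hs : 0 ≤ s) : (1 + X : ℝ[X]).eval s ≠ 0 := by
  simp only [eval_add, eval_one, eval_X]
  positivity

lemma isPrimitivable_dlogForm_one_add_X (k : ℕ) : IsPrimitivable (dlogForm k (1 + X)) :=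
  isPrimitivable_dlogForm k fun _ => eval_one_add_X_ne_zero

lemma ne_zero_of_eval_ne_zero {s : ℝ} (h : f.eval s ≠ 0) : f ≠ 0 := by
  rintro rfl
  exact h eval_zero

lemma dlogIntegral_one_sub_X_add_one_add_X (hk : 2 ≤ k) (hx : 0 < x) :
    dlogIntegral k (1 - X) x + dlogIntegral k (1 + X) x =
      dlogIntegral k (1 - X) (x ^ 2) / 2 ^ k := by
  rw [← dlogIntegral_mul (isPrimitivable_dlogForm_one_sub_X hk)
    (isPrimitivable_dlogForm_one_add_X k) (ne_zero_of_eval_ne_zero (s := 0) (by simp))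
    (ne_zero_of_eval_ne_zero (s := 0) (by simp)) hx, one_sub_X_mul_one_add_X,
    dlogIntegral_expand k _ two_ne_zero hx.le]
  simp

lemma dlogIntegral_one_add_X_one (hk : 2 ≤ k) :
    dlogIntegral k (1 + X) 1 =
      (-1) ^ (k + 1) * k.factorial * (1 / 2 ^ k - 1) * zeta (k + 1) := by
  have h := dlogIntegral_one_sub_X_add_one_add_X hk one_pos
  rw [one_pow, dlogIntegral_one_sub_X_one (one_le_two.trans hk)] at h
  linear_combination h

lemma eval_one_add_X_add_X_sq_ne_zero {s : ℝ} (hs : 0 ≤ s) :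
    (1 + X + X ^ 2 : ℝ[X]).eval s ≠ 0 := by
  simp only [eval_add, eval_one, eval_X, eval_pow]
  positivity

lemma eval_one_sub_X_add_X_sq_ne_zero (s : ℝ) : (1 - X + X ^ 2 : ℝ[X]).eval s ≠ 0 := by
  simp only [eval_add, eval_sub, eval_one, eval_X, eval_pow]
  nlinarith [sq_nonneg (2 * s - 1)]

lemma isPrimitivable_dlogForm_one_add_X_add_X_sq (k : ℕ) :
    IsPrimitivable (dlogForm k (1 + X + X ^ 2)) :=
  isPrimitivable_dlogForm k fun _ => eval_one_add_X_add_X_sq_ne_zero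

lemma isPrimitivable_dlogForm_one_sub_X_add_X_sq (k : ℕ) :
    IsPrimitivable (dlogForm k (1 - X + X ^ 2)) :=
  isPrimitivable_dlogForm k fun s _ => eval_one_sub_X_add_X_sq_ne_zero s

lemma dlogIntegral_one_sub_X_cube (hk : 2 ≤ k) (hx : 0 < x) :
    dlogIntegral k (1 - X) x + dlogIntegral k (1 + X + X ^ 2) x =
      dlogIntegral k (1 - X) (x ^ 3) / 3 ^ k := by
  have hfactor : (1 - X) * (1 + X + X ^ 2) = expand ℝ 3 (1 - X) := by
    simp only [map_sub, map_one, expand_X]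
    ring
  have hexpand := dlogIntegral_expand k (1 - X) three_ne_zero hx.le
  rwa [← hfactor, dlogIntegral_mul (isPrimitivable_dlogForm_one_sub_X hk)
    (isPrimitivable_dlogForm_one_add_X_add_X_sq k) (ne_zero_of_eval_ne_zero (s := 0) (by simp))
    (ne_zero_of_eval_ne_zero (s := 0) (by simp)) hx, Nat.cast_ofNat] at hexpand

lemma dlogIntegral_one_sub_X_add_X_sq_add (hx : 0 < x) :
    dlogIntegral k (1 - X + X ^ 2) x + dlogIntegral k (1 + X + X ^ 2) x =
      dlogIntegral k (1 + X + X ^ 2) (x ^ 2) / 2 ^ k := by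
  have hfactor : (1 - X + X ^ 2) * (1 + X + X ^ 2) = expand ℝ 2 (1 + X + X ^ 2) := by
    simp only [map_add, map_pow, map_one, expand_X]
    ring
  have hexpand := dlogIntegral_expand k (1 + X + X ^ 2) two_ne_zero hx.le
  rwa [← hfactor, dlogIntegral_mul (isPrimitivable_dlogForm_one_sub_X_add_X_sq k)
    (isPrimitivable_dlogForm_one_add_X_add_X_sq k) (ne_zero_of_eval_ne_zero (s := 0) (by simp))
    (ne_zero_of_eval_ne_zero (s := 0) (by simp)) hx, Nat.cast_ofNat] at hexpand

lemma dlogIntegral_one_add_X_inv (hk : Even k) (hx : 0 < x) :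
    dlogIntegral k (1 + X) x⁻¹ = dlogIntegral k (1 + X) x - log x ^ (k + 1) / (k + 1) := by
  have hpal : ∀ s : ℝ, s ≠ 0 → (1 + X : ℝ[X]).eval s⁻¹ * s ^ 1 = (1 + X : ℝ[X]).eval s := by
    intro s hs
    simp only [eval_add, eval_one, eval_X]
    field_simp
    ring
  simpa using dlogIntegral_inv hk (fun _ => eval_one_add_X_ne_zero) hpal hx

lemma dlogIntegral_one_add_X_add_X_sq_inv (hk : Even k) (hx : 0 < x) :
    dlogIntegral k (1 + X + X ^ 2) x⁻¹ =
      dlogIntegral k (1 + X + X ^ 2) x - 2 * log x ^ (k + 1) / (k + 1) := by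
  have hpal : ∀ s : ℝ, s ≠ 0 →
      (1 + X + X ^ 2 : ℝ[X]).eval s⁻¹ * s ^ 2 = (1 + X + X ^ 2 : ℝ[X]).eval s := by
    intro s hs
    simp only [eval_add, eval_one, eval_X, eval_pow]
    field_simp
    ring
  exact_mod_cast dlogIntegral_inv hk (fun _ => eval_one_add_X_add_X_sq_ne_zero) hpal hx

end DlogIntegral

/-! ### The integral of the squared `arsinh` -/

/-- The integrand whose integral over `[0, 1]` carries the `ζ(5)` part of the series. -/
noncomputable def arsinhForm (s : ℝ) : ℝ :=
  log s ^ 2 * (arsinh (√s / 2) ^ 2 * (17 / s - 24 / (1 + s)))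

lemma arsinh_sqrt_div_two_sq_le {s : ℝ} (hs : 0 ≤ s) : arsinh (√s / 2) ^ 2 ≤ s / 4 := by
  have h0 : 0 ≤ arsinh (√s / 2) := arsinh_nonneg_iff.2 (by positivity)
  have h1 : arsinh (√s / 2) ≤ √s / 2 := by
    simpa only [sinh_arsinh] using self_le_sinh_iff.2 h0
  calc arsinh (√s / 2) ^ 2 ≤ (√s / 2) ^ 2 := pow_le_pow_left₀ h0 h1 2
    _ = s / 4 := by rw [div_pow, sq_sqrt hs]; norm_num

lemma abs_arsinh_sq_mul_le {s : ℝ} (hs : 0 < s) :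
    |arsinh (√s / 2) ^ 2 * (17 / s - 24 / (1 + s))| ≤ 17 / 4 := by
  have hfactor : |17 / s - 24 / (1 + s)| ≤ 17 / s := by
    have h24 : 24 / (1 + s) ≤ 2 * (17 / s) := by
      rw [← mul_div_assoc, div_le_div_iff₀ (by positivity) hs]
      linarith
    have h0 : 0 ≤ 24 / (1 + s) := by positivity
    exact abs_le.2 ⟨by linarith, by linarith⟩
  calc |arsinh (√s / 2) ^ 2 * (17 / s - 24 / (1 + s))|
      = arsinh (√s / 2) ^ 2 * |17 / s - 24 / (1 + s)| := by rw [abs_mul, abs_sq]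
    _ ≤ s / 4 * (17 / s) := mul_le_mul (arsinh_sqrt_div_two_sq_le hs.le) hfactor
        (abs_nonneg _) (by positivity)
    _ = 17 / 4 := by field_simp

lemma isPrimitivable_arsinhForm : IsPrimitivable arsinhForm := by
  refine isPrimitivable_log_pow_mul 2 (fun s hs => ?_) ?_
  · have h0 : s ≠ 0 := ne_of_gt hs
    have h1 : 1 + s ≠ 0 := (add_pos one_pos hs).ne'
    have harsinh : ContinuousAt (fun s => arsinh (√s / 2)) s :=
      (continuous_arsinh.comp (continuous_sqrt.div_const 2)).continuousAt
    exact ContinuousAt.continuousWithinAt (by fun_prop (disch := assumption))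
  · refine .of_bound (17 / 4) ?_
    filter_upwards [self_mem_nhdsWithin] with s hs
    simpa using abs_arsinh_sq_mul_le hs

-- With `w = -log (1 - t) / 2`, the square of `2 sinh w` is `2 cosh (2 w) - 2 = t ^ 2 / (1 - t)`.
lemma arsinh_sqrt_sq_mul_one_sub_inv {t : ℝ} (ht : t ∈ Ico (0 : ℝ) 1) :
    arsinh (√(t ^ 2 * (1 - t) ^ (-1 : ℤ)) / 2) = -log (1 - t) / 2 := by
  have h1 : 0 < 1 - t := sub_pos.2 ht.2
  have hlog : log (1 - t) ≤ 0 := log_nonpos h1.le (by linarith [ht.1])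
  have hsinh : 0 ≤ sinh (-log (1 - t) / 2) := sinh_nonneg_iff.2 (by linarith)
  have hsq : t ^ 2 * (1 - t) ^ (-1 : ℤ) = (2 * sinh (-log (1 - t) / 2)) ^ 2 := by
    have hcosh := cosh_two_mul (-log (1 - t) / 2)
    rw [mul_div_cancel₀ _ two_ne_zero, cosh_neg, cosh_log h1, cosh_sq] at hcosh
    rw [zpow_neg_one, mul_pow]
    field_simp at hcosh ⊢
    linear_combination hcosh
  rw [hsq, sqrt_sq (by positivity), mul_div_cancel_left₀ _ two_ne_zero, arsinh_sinh]

lemma continuousOn_log_pow_mul_log_one_sub_pow (i j : ℕ) :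
    ContinuousOn (fun t => log t ^ i * log (1 - t) ^ (j + 1)) (Ico 0 1) := by
  have hlog : DifferentiableOn ℝ (fun t => log (1 - t)) (Iio 1) := fun t ht =>
    ((differentiableAt_id.const_sub 1).log (sub_pos.2 ht).ne').differentiableWithinAt
  have hnhds : Iio (1 : ℝ) ∈ 𝓝 0 := Iio_mem_nhds one_pos
  have hslope : ContinuousOn (dslope (fun t => log (1 - t)) 0) (Iio 1) :=
    (continuousOn_dslope hnhds).2 ⟨hlog.continuousOn, hlog.differentiableAt hnhds⟩
  refine (((continuousOn_pow_succ_mul_log_pow j i).mono Ico_subset_Ici_self).mul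
    ((hslope.mono Ico_subset_Iio_self).pow (j + 1))).congr fun t _ => ?_
  have hfactor : log (1 - t) = t * dslope (fun t => log (1 - t)) 0 t := by
    simpa using (sub_smul_dslope (fun t => log (1 - t)) 0 t).symm
  simp only [Pi.mul_apply, Pi.pow_apply]
  rw [hfactor]
  ring

/-- The pullback of `L_4 f` along the monomial `t ^ i * (1 - t) ^ j`. -/
noncomputable def ladderTerm (f : ℝ[X]) (i : ℕ) (j : ℤ) (t : ℝ) : ℝ :=
  dlogIntegral 4 f (t ^ i * (1 - t) ^ j)

lemma hasDerivAt_ladderTerm {f : ℝ[X]} (hf : IsPrimitivable (dlogForm 4 f)) {i : ℕ} {j : ℤ}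
    {t d : ℝ} (ht : t ∈ Ioo (0 : ℝ) 1) (h0 : f.eval (t ^ i * (1 - t) ^ j) ≠ 0)
    (hd : f.derivative.eval (t ^ i * (1 - t) ^ j) *
      (t ^ i * (1 - t) ^ j * (i / t - j / (1 - t))) = d * f.eval (t ^ i * (1 - t) ^ j)) :
    HasDerivAt (ladderTerm f i j) ((i * log t + j * log (1 - t)) ^ 4 * d) t := by
  have h1 : 0 < 1 - t := sub_pos.2 ht.2
  refine (hf.hasDerivAt_integral_pow_mul_zpow i j ht).congr_deriv ?_
  rw [dlogForm, log_mul (pow_pos ht.1 i).ne' (zpow_pos h1 j).ne', log_pow, log_zpow, mul_assoc,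
    div_mul_eq_mul_div, hd, mul_div_cancel_right₀ _ h0]

lemma continuousOn_ladderTerm {f : ℝ[X]} (hf : IsPrimitivable (dlogForm 4 f)) (i : ℕ) (j : ℤ) :
    ContinuousOn (ladderTerm f i j) (Ico 0 1) :=
  hf.continuousOn_integral_pow_mul_zpow i j

lemma hasDerivAt_ladderTerm_one_add_X (i : ℕ) (j : ℤ) {t d : ℝ} (ht : t ∈ Ioo (0 : ℝ) 1)
    (hd : t ^ i * (1 - t) ^ j * (i / t - j / (1 - t)) = d * (1 + t ^ i * (1 - t) ^ j)) :
    HasDerivAt (ladderTerm (1 + X) i j) ((i * log t + j * log (1 - t)) ^ 4 * d) t := by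
  refine hasDerivAt_ladderTerm (isPrimitivable_dlogForm_one_add_X 4) ht
    (eval_one_add_X_ne_zero ?_) ?_
  · exact mul_nonneg (pow_nonneg ht.1.le i) (zpow_nonneg (sub_pos.2 ht.2).le j)
  · simpa using hd

lemma hasDerivAt_ladderTerm_one_sub_X (i : ℕ) (j : ℤ) {t d : ℝ} (ht : t ∈ Ioo (0 : ℝ) 1)
    (h1 : t ^ i * (1 - t) ^ j < 1)
    (hd : -(t ^ i * (1 - t) ^ j * (i / t - j / (1 - t))) = d * (1 - t ^ i * (1 - t) ^ j)) :
    HasDerivAt (ladderTerm (1 - X) i j) ((i * log t + j * log (1 - t)) ^ 4 * d) t := by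
  refine hasDerivAt_ladderTerm (isPrimitivable_dlogForm_one_sub_X (by norm_num)) ht ?_ ?_
  · simpa [sub_eq_zero] using h1.ne'
  · simpa using hd

lemma hasDerivAt_ladderTerm_one_add_X_add_X_sq (i : ℕ) (j : ℤ) {t d : ℝ} (ht : t ∈ Ioo (0 : ℝ) 1)
    (hd : (1 + 2 * (t ^ i * (1 - t) ^ j)) * (t ^ i * (1 - t) ^ j * (i / t - j / (1 - t))) =
      d * (1 + t ^ i * (1 - t) ^ j + (t ^ i * (1 - t) ^ j) ^ 2)) :
    HasDerivAt (ladderTerm (1 + X + X ^ 2) i j) ((i * log t + j * log (1 - t)) ^ 4 * d) t := by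
  refine hasDerivAt_ladderTerm (isPrimitivable_dlogForm_one_add_X_add_X_sq 4) ht
    (eval_one_add_X_add_X_sq_ne_zero ?_) ?_
  · exact mul_nonneg (pow_nonneg ht.1.le i) (zpow_nonneg (sub_pos.2 ht.2).le j)
  · simpa [one_add_one_eq_two] using hd

lemma hasDerivAt_ladderTerm_one_sub_X_add_X_sq (i : ℕ) (j : ℤ) {t d : ℝ} (ht : t ∈ Ioo (0 : ℝ) 1)
    (hd : (-1 + 2 * (t ^ i * (1 - t) ^ j)) * (t ^ i * (1 - t) ^ j * (i / t - j / (1 - t))) =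
      d * (1 - t ^ i * (1 - t) ^ j + (t ^ i * (1 - t) ^ j) ^ 2)) :
    HasDerivAt (ladderTerm (1 - X + X ^ 2) i j) ((i * log t + j * log (1 - t)) ^ 4 * d) t := by
  refine hasDerivAt_ladderTerm (isPrimitivable_dlogForm_one_sub_X_add_X_sq 4) ht
    (eval_one_sub_X_add_X_sq_ne_zero _) ?_
  simpa [one_add_one_eq_two] using hd

/-- The part of the ladder that is elementary in `a = log t` and `b = log (1 - t)`. -/
noncomputable def ladderPolynomial (a b : ℝ) : ℝ :=
  136 / 3 * (a ^ 3 * b ^ 2) - 68 * (a ^ 2 * b ^ 3) + 37 * (a * b ^ 4) - 103 / 15 * b ^ 5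

/-- The polylogarithm ladder: an antiderivative of the pullback of `4 * arsinhForm` along
`s = t ^ 2 / (1 - t)`. Its coefficients come from comparing the multiples of `dlog t`,
`dlog (1 - t)` and `dlog (1 - t + t ^ 2)` on both sides; the constant makes it vanish at `0`. -/
noncomputable def ladder (t : ℝ) : ℝ :=
  ladderPolynomial (log t) (log (1 - t))
    + 4 / 9 * (ladderTerm (1 + X) 1 (-2) t + ladderTerm (1 - X) 1 1 t)
    - 36 * (ladderTerm (1 - X + X ^ 2) 1 0 t + ladderTerm (1 + X + X ^ 2) 1 (-1) t)
    + 40 / 9 * ladderTerm (1 + X) 2 (-1) t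
    + 12 * (ladderTerm (1 + X) 1 (-1) t + ladderTerm (1 - X) 1 0 t)
    - 3 * (ladderTerm (1 - X) 0 1 t - dlogIntegral 4 (1 - X) 1)

lemma continuousOn_ladder : ContinuousOn ladder (Ico 0 1) := by
  have hpoly : ContinuousOn (fun t => ladderPolynomial (log t) (log (1 - t))) (Ico 0 1) := by
    have hmono := continuousOn_log_pow_mul_log_one_sub_pow
    refine ((((hmono 3 1).const_smul (136 / 3 : ℝ)).sub ((hmono 2 2).const_smul (68 : ℝ))).add
      ((hmono 1 3).const_smul (37 : ℝ))).sub ((hmono 0 4).const_smul (103 / 15 : ℝ)) |>.congr ?_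
    intro t _
    simp [ladderPolynomial]
  have hsub := isPrimitivable_dlogForm_one_sub_X (k := 4) (by norm_num)
  have hadd := isPrimitivable_dlogForm_one_add_X 4
  have plus_one_neg_two := continuousOn_ladderTerm hadd 1 (-2)
  have minus_one_one := continuousOn_ladderTerm hsub 1 1
  have sixth_one_zero := continuousOn_ladderTerm (isPrimitivable_dlogForm_one_sub_X_add_X_sq 4) 1 0
  have third_one_neg_one := continuousOn_ladderTerm
    (isPrimitivable_dlogForm_one_add_X_add_X_sq 4) 1 (-1)
  have plus_two_neg_one := continuousOn_ladderTerm hadd 2 (-1)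
  have plus_one_neg_one := continuousOn_ladderTerm hadd 1 (-1)
  have minus_one_zero := continuousOn_ladderTerm hsub 1 0
  have minus_zero_one := continuousOn_ladderTerm hsub 0 1
  unfold ladder
  fun_prop

lemma hasDerivAt_ladderPolynomial {t : ℝ} (ht : t ∈ Ioo (0 : ℝ) 1) :
    HasDerivAt (fun t => ladderPolynomial (log t) (log (1 - t)))
      ((136 * (log t ^ 2 * log (1 - t) ^ 2) - 136 * (log t * log (1 - t) ^ 3) +
          37 * log (1 - t) ^ 4) * (1 / t) -
        (272 / 3 * (log t ^ 3 * log (1 - t)) - 204 * (log t ^ 2 * log (1 - t) ^ 2) +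
          148 * (log t * log (1 - t) ^ 3) - 103 / 3 * log (1 - t) ^ 4) * (1 / (1 - t))) t := by
  have ha : HasDerivAt log (1 / t) t := by simpa using hasDerivAt_log ht.1.ne'
  have hb : HasDerivAt (fun t => log (1 - t)) (-(1 / (1 - t))) t :=
    (((hasDerivAt_id t).const_sub 1).log (sub_pos.2 ht.2).ne').congr_deriv (neg_div _ _)
  refine ((((((ha.pow 3).mul (hb.pow 2)).const_mul (136 / 3)).sub
    (((ha.pow 2).mul (hb.pow 3)).const_mul 68)).add ((ha.mul (hb.pow 4)).const_mul 37)).sub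
    ((hb.pow 5).const_mul (103 / 15))).congr_deriv ?_
  simp only [Pi.pow_apply, Nat.add_one_sub_one, pow_one]
  push_cast
  ring

lemma hasDerivAt_ladder {t : ℝ} (ht : t ∈ Ioo (0 : ℝ) 1) :
    HasDerivAt ladder ((2 * log t - log (1 - t)) ^ 2 * log (1 - t) ^ 2 *
      (17 * (2 / t + 1 / (1 - t)) -
        24 * ((2 * t - 1) / (1 - t + t ^ 2) + 1 / (1 - t)))) t := by
  have h0 : 0 < t := ht.1
  have h1 : 0 < 1 - t := sub_pos.2 ht.2
  have ht0 : t ≠ 0 := h0.ne'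
  have ht1 : 1 - t ≠ 0 := h1.ne'
  have hcyc : 1 - t + t ^ 2 ≠ 0 := by positivity
  have plus_one_neg_two := hasDerivAt_ladderTerm_one_add_X 1 (-2)
    (d := (2 * t - 1) / (1 - t + t ^ 2) + 2 / (1 - t)) ht (by push_cast; field_simp; ring)
  have minus_one_one := hasDerivAt_ladderTerm_one_sub_X 1 1 (d := (2 * t - 1) / (1 - t + t ^ 2)) ht
    (by rw [pow_one, zpow_one]; nlinarith) (by push_cast; field_simp; ring)
  have sixth_one_zero := hasDerivAt_ladderTerm_one_sub_X_add_X_sq 1 0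
    (d := (2 * t - 1) / (1 - t + t ^ 2)) ht (by push_cast; field_simp; ring)
  have third_one_neg_one := hasDerivAt_ladderTerm_one_add_X_add_X_sq 1 (-1)
    (d := (2 * t - 1) / (1 - t + t ^ 2) + 2 / (1 - t)) ht (by push_cast; field_simp; ring)
  have plus_two_neg_one := hasDerivAt_ladderTerm_one_add_X 2 (-1)
    (d := (2 * t - 1) / (1 - t + t ^ 2) + 1 / (1 - t)) ht (by push_cast; field_simp; ring)
  have plus_one_neg_one := hasDerivAt_ladderTerm_one_add_X 1 (-1) (d := 1 / (1 - t)) ht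
    (by push_cast; field_simp; ring)
  have minus_one_zero := hasDerivAt_ladderTerm_one_sub_X 1 0 (d := -1 / (1 - t)) ht
    (by simpa using ht.2) (by push_cast; field_simp; ring)
  have minus_zero_one := hasDerivAt_ladderTerm_one_sub_X 0 1 (d := 1 / t) ht
    (by simpa using h0) (by push_cast; field_simp; ring)
  refine ((((((hasDerivAt_ladderPolynomial ht).add
    ((plus_one_neg_two.add minus_one_one).const_mul (4 / 9))).sub
    ((sixth_one_zero.add third_one_neg_one).const_mul 36)).add
    (plus_two_neg_one.const_mul (40 / 9))).add
    ((plus_one_neg_one.add minus_one_zero).const_mul 12)).sub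
    ((minus_zero_one.sub_const _).const_mul 3)).congr_deriv ?_
  push_cast
  ring

lemma ladder_zero : ladder 0 = 0 := by
  simp [ladder, ladderTerm, ladderPolynomial]

lemma integral_arsinhForm_eq_ladder {t : ℝ} (ht : t ∈ Ico (0 : ℝ) 1) :
    4 * ∫ s in (0 : ℝ)..t ^ 2 * (1 - t) ^ (-1 : ℤ), arsinhForm s = ladder t := by
  have hderiv : ∀ x ∈ Ioo 0 t, HasDerivAt (fun x =>
      4 * (∫ s in (0 : ℝ)..x ^ 2 * (1 - x) ^ (-1 : ℤ), arsinhForm s) - ladder x) 0 x := by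
    intro x hx
    have hx1 : x ∈ Ioo (0 : ℝ) 1 := ⟨hx.1, hx.2.trans ht.2⟩
    have h0 : 0 < x := hx.1
    have h1 : 0 < 1 - x := sub_pos.2 hx1.2
    have hcyc : 1 - x + x ^ 2 ≠ 0 := by positivity
    refine (((isPrimitivable_arsinhForm.hasDerivAt_integral_pow_mul_zpow 2 (-1) hx1).const_mul
      4).sub (hasDerivAt_ladder hx1)).congr_deriv ?_
    have hkernel : 17 / (x ^ 2 * (1 - x) ^ (-1 : ℤ)) - 24 / (1 + x ^ 2 * (1 - x) ^ (-1 : ℤ)) =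
        (1 - x) * (17 / x ^ 2 - 24 / (1 - x + x ^ 2)) := by
      field_simp
    rw [arsinhForm, arsinh_sqrt_sq_mul_one_sub_inv ⟨h0.le, hx1.2⟩, hkernel,
      log_mul (pow_pos h0 2).ne' (zpow_pos h1 _).ne', log_pow, log_zpow]
    push_cast
    field_simp
    ring
  have hcont := ((isPrimitivable_arsinhForm.continuousOn_integral_pow_mul_zpow 2 (-1)).const_smul
    (4 : ℝ)).sub continuousOn_ladder
  have hconst := intervalIntegral.integral_eq_sub_of_hasDerivAt_of_le ht.1
    (hcont.mono (Icc_subset_Ico_right ht.2)) hderiv intervalIntegrable_const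
  simpa [ladder_zero, eq_comm (a := (0 : ℝ)), sub_eq_zero] using hconst

-- At the inverse golden ratio every argument of the ladder is a power of `p`, and the inversion
-- and distribution relations eliminate all of them except the arguments equal to `1`.
lemma ladder_neg_goldenConj : ladder (-goldenConj) = 28 * zeta 5 := by
  obtain ⟨p, hp⟩ : ∃ p, p = -goldenConj := ⟨_, rfl⟩
  have hp0 : 0 < p := by linarith [goldenConj_neg]
  have hsq : 1 - p = p ^ 2 := by rw [hp]; linear_combination -goldenConj_sq
  have hne : p ≠ 0 := hp0.ne'
  have arg₁ : p ^ 1 * (p ^ 2) ^ (-2 : ℤ) = (p ^ 3)⁻¹ := by field_simp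
  have arg₂ : p ^ 1 * (p ^ 2) ^ (1 : ℤ) = p ^ 3 := by rw [zpow_one]; ring
  have arg₃ : p ^ 1 * (p ^ 2) ^ (0 : ℤ) = p := by simp
  have arg₄ : p ^ 1 * (p ^ 2) ^ (-1 : ℤ) = p⁻¹ := by field_simp
  have arg₅ : p ^ 2 * (p ^ 2) ^ (-1 : ℤ) = 1 := by field_simp
  have arg₆ : p ^ 0 * (p ^ 2) ^ (1 : ℤ) = p ^ 2 := by simp
  have hp3 : 0 < p ^ 3 := pow_pos hp0 3
  have heven : Even 4 := by decide
  have htwo : 2 ≤ 4 := by norm_num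
  have dup_one := dlogIntegral_one_sub_X_add_one_add_X htwo hp0
  have dup_cube := dlogIntegral_one_sub_X_add_one_add_X htwo hp3
  have dup_cyclotomic := dlogIntegral_one_sub_X_add_X_sq_add (k := 4) hp0
  have triple := dlogIntegral_one_sub_X_cube htwo (pow_pos hp0 2)
  rw [← pow_mul] at dup_cube triple
  have value_sub : dlogIntegral 4 (1 - X) 1 = -24 * zeta 5 := by
    norm_num [dlogIntegral_one_sub_X_one, Nat.factorial]
  have value_add : dlogIntegral 4 (1 + X) 1 = 45 / 2 * zeta 5 := by
    norm_num [dlogIntegral_one_add_X_one, Nat.factorial]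
  rw [← hp]
  simp only [ladder, ladderTerm, ladderPolynomial, hsq, arg₁, arg₂, arg₃, arg₄, arg₅, arg₆,
    dlogIntegral_one_add_X_inv heven hp3, dlogIntegral_one_add_X_inv heven hp0,
    dlogIntegral_one_add_X_add_X_sq_inv heven hp0, log_pow, value_add, value_sub]
  push_cast
  linear_combination 4 / 9 * dup_cube + 12 * dup_one - 36 * dup_cyclotomic - 9 / 4 * triple

lemma integral_arsinhForm : ∫ s in (0 : ℝ)..1, arsinhForm s = 7 * zeta 5 := by
  have hmem : -goldenConj ∈ Ico (0 : ℝ) 1 :=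
    ⟨by linarith [goldenConj_neg], by linarith [neg_one_lt_goldenConj]⟩
  have hone : (-goldenConj) ^ 2 * (1 - -goldenConj) ^ (-1 : ℤ) = 1 := by
    rw [zpow_neg_one, neg_sq, goldenConj_sq, sub_neg_eq_add, add_comm, mul_inv_cancel₀]
    linarith [neg_one_lt_goldenConj]
  have h := integral_arsinhForm_eq_ladder hmem
  rw [hone, ladder_neg_goldenConj] at h
  linear_combination h / 4

/-! ### Generating function of the inverse central binomial coefficients -/

/-- The coefficient `1 / (m ^ 2 * (2 m).choose m)` of the series, at `m = n + 1`. -/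
noncomputable def aperyCoeff (n : ℕ) : ℝ := 1 / ((n + 1) ^ 2 * (n + 1).centralBinom)

lemma aperyCoeff_nonneg (n : ℕ) : 0 ≤ aperyCoeff n := by
  unfold aperyCoeff
  positivity

lemma succ_sq_mul_aperyCoeff (n : ℕ) : (n + 1) ^ 2 * aperyCoeff n = 1 / (n + 1).centralBinom := by
  rw [aperyCoeff]
  field_simp

lemma succ_mul_four_mul_add_two_mul_aperyCoeff (n : ℕ) :
    (n + 1) * (4 * n + 2) * aperyCoeff n = 1 / n.centralBinom := by
  have hrec : ((n : ℝ) + 1) * (n + 1).centralBinom = 2 * (2 * n + 1) * n.centralBinom := by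
    exact_mod_cast n.succ_mul_centralBinom_succ
  have h0 : (n.centralBinom : ℝ) ≠ 0 := Nat.cast_ne_zero.2 n.centralBinom_ne_zero
  have h1 : ((n + 1).centralBinom : ℝ) ≠ 0 := Nat.cast_ne_zero.2 (n + 1).centralBinom_ne_zero
  rw [aperyCoeff]
  field_simp
  linear_combination -hrec

/-- The partial sums of the generating function of `aperyCoeff`, as polynomials. -/
noncomputable def aperySum (N : ℕ) : ℝ[X] :=
  ∑ n ∈ Finset.range N, C (aperyCoeff n) * X ^ (n + 1)

lemma eval_aperySum (N : ℕ) (x : ℝ) :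
    (aperySum N).eval x = ∑ n ∈ Finset.range N, aperyCoeff n * x ^ (n + 1) := by
  simp [aperySum, eval_finsetSum]

lemma aperySum_differential_equation (N : ℕ) :
    (4 * X - X ^ 2) * (aperySum N).derivative.derivative + (2 - X) * (aperySum N).derivative =
      1 - C (1 / (N.centralBinom : ℝ)) * X ^ N := by
  induction N with
  | zero => simp [aperySum]
  | succ N ih =>
    have hpow : X * ((N : ℝ[X]) * X ^ (N - 1)) = (N : ℝ[X]) * X ^ N := by
      rcases N with _ | N
      · simp
      · rw [Nat.add_sub_cancel]; ring
    have hder : (aperySum (N + 1)).derivative =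
        (aperySum N).derivative + C (aperyCoeff N) * (((N : ℝ[X]) + 1) * X ^ N) := by
      simp [aperySum, Finset.sum_range_succ]
    have hder2 : (aperySum (N + 1)).derivative.derivative = (aperySum N).derivative.derivative +
        C (aperyCoeff N) * (((N : ℝ[X]) + 1) * ((N : ℝ[X]) * X ^ (N - 1))) := by
      simp [hder, derivative_X_pow]
    rw [← succ_mul_four_mul_add_two_mul_aperyCoeff] at ih
    rw [hder2, hder, ← succ_sq_mul_aperyCoeff]
    simp only [map_mul, map_add, map_pow, map_natCast, map_one, map_ofNat] at ih ⊢
    linear_combination ih + (4 - X) * C (aperyCoeff N) * ((N : ℝ[X]) + 1) * hpow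

lemma summable_pow_div_centralBinom {r : ℝ} (h0 : 0 ≤ r) (h4 : r < 4) :
    Summable fun n : ℕ => r ^ n / n.centralBinom := by
  have hgeom : ‖r / 4‖ < 1 := by
    rw [norm_of_nonneg (by positivity)]
    linarith
  have hbound := ((summable_pow_mul_geometric_of_norm_lt_one 1 hgeom).mul_left 2).add
    (summable_geometric_of_norm_lt_one hgeom)
  refine hbound.of_nonneg_of_le (fun n => by positivity) fun n => ?_
  have hfour : (4 : ℝ) ^ n ≤ (2 * n + 1) * n.centralBinom := by
    rcases n.eq_zero_or_pos with rfl | hn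
    · simp
    · have hle : (4 : ℝ) ^ n ≤ 2 * n * n.centralBinom := by
        exact_mod_cast n.four_pow_le_two_mul_self_mul_centralBinom hn
      linarith [(n.centralBinom.cast_nonneg : (0 : ℝ) ≤ _)]
  have hpos : (0 : ℝ) < n.centralBinom := Nat.cast_pos.2 n.centralBinom_pos
  calc r ^ n / n.centralBinom = r ^ n * (1 / n.centralBinom) := (mul_one_div _ _).symm
    _ ≤ r ^ n * ((2 * n + 1) / 4 ^ n) := by
      refine mul_le_mul_of_nonneg_left ?_ (by positivity)
      rw [div_le_div_iff₀ hpos (by positivity)]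
      linarith
    _ = 2 * (n ^ 1 * (r / 4) ^ n) + (r / 4) ^ n := by rw [div_pow]; ring

lemma summable_aperyCoeff_mul_pow {x r : ℝ} (hx : |x| ≤ r) (hr : r < 4) :
    Summable fun n => aperyCoeff n * x ^ (n + 1) := by
  have h0 : 0 ≤ r := (abs_nonneg x).trans hx
  refine .of_norm_bounded ((summable_nat_add_iff 1).2 (summable_pow_div_centralBinom h0 hr))
    fun n => ?_
  have hcoeff : aperyCoeff n ≤ 1 / (n + 1).centralBinom := by
    rw [← succ_sq_mul_aperyCoeff]
    exact le_mul_of_one_le_left (aperyCoeff_nonneg n) (one_le_pow₀ (by simp))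
  rw [norm_mul, norm_pow, norm_of_nonneg (aperyCoeff_nonneg n), norm_eq_abs, div_eq_mul_one_div,
    mul_comm]
  exact mul_le_mul (pow_le_pow_left₀ (abs_nonneg x) hx _) hcoeff (aperyCoeff_nonneg n)
    (by positivity)

lemma abs_sub_mul_sq_div_two_le {f f' f'' : ℝ → ℝ} {c ε T : ℝ} (hf : ∀ u, HasDerivAt f (f' u) u)
    (hf' : ∀ u, HasDerivAt f' (f'' u) u) (h0 : f 0 = 0) (h0' : f' 0 = 0)
    (hbound : ∀ u ∈ uIcc 0 T, |f'' u - c| ≤ ε) : |f T - c * T ^ 2 / 2| ≤ ε * T ^ 2 := by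
  have hε : 0 ≤ ε := (abs_nonneg _).trans (hbound 0 left_mem_uIcc)
  have first_order : ∀ u ∈ uIcc 0 T, |f' u - c * u| ≤ ε * |T| := by
    intro u hu
    have hderiv (v : ℝ) : HasDerivAt (fun v => f' v - c * v) (f'' v - c) v :=
      (hf' v).sub (by simpa using (hasDerivAt_id v).const_mul c)
    have h := (convex_uIcc 0 T).norm_image_sub_le_of_norm_hasDerivWithin_le
      (fun v _ => (hderiv v).hasDerivWithinAt) hbound left_mem_uIcc hu
    have huT : |u| ≤ |T| := by simpa using abs_sub_left_of_mem_uIcc hu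
    simp only [h0', mul_zero, sub_zero, norm_eq_abs] at h
    exact h.trans (mul_le_mul_of_nonneg_left huT hε)
  have hderiv (v : ℝ) : HasDerivAt (fun v => f v - c * v ^ 2 / 2) (f' v - c * v) v :=
    (hf v).sub ((((hasDerivAt_pow 2 v).const_mul c).div_const 2).congr_deriv
      (by simp only [Nat.cast_ofNat, Nat.add_one_sub_one, pow_one]; ring))
  have h := (convex_uIcc 0 T).norm_image_sub_le_of_norm_hasDerivWithin_le
    (fun v _ => (hderiv v).hasDerivWithinAt) first_order left_mem_uIcc right_mem_uIcc
  simpa [h0, mul_assoc, ← sq] using h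

-- Substituting `q` turns the left side of `aperySum_differential_equation`, times `c`, into the
-- second derivative along `u`; the generating function therefore becomes `c * u ^ 2 / 2`.
lemma hasSum_aperyCoeff_mul_pow_comp {q q' : ℝ → ℝ} {c r T : ℝ}
    (hq : ∀ u, HasDerivAt q (q' u) u) (hq' : ∀ u, HasDerivAt q' (c * (2 - q u)) u)
    (henergy : ∀ u, q' u ^ 2 = c * (q u * (4 - q u))) (h0 : q 0 = 0)
    (hr : r < 4) (hbound : ∀ u ∈ uIcc 0 T, |q u| ≤ r) :
    HasSum (fun n => aperyCoeff n * q T ^ (n + 1)) (c * T ^ 2 / 2) := by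
  have hr0 : 0 ≤ r := (abs_nonneg _).trans (hbound 0 left_mem_uIcc)
  refine (summable_aperyCoeff_mul_pow (hbound T right_mem_uIcc) hr).hasSum_iff_tendsto_nat.2 ?_
  have herror (N : ℕ) : |(aperySum N).eval (q T) - c * T ^ 2 / 2| ≤
      |c| * (r ^ N / N.centralBinom) * T ^ 2 := by
    have h0' : q' 0 = 0 := by simpa [h0] using henergy 0
    have hderiv2 (u : ℝ) : HasDerivAt (fun u => (aperySum N).derivative.eval (q u) * q' u)
        (c * (1 - 1 / N.centralBinom * q u ^ N)) u := by
      refine ((((aperySum N).derivative.hasDerivAt (q u)).comp u (hq u)).mul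
        (hq' u)).congr_deriv ?_
      have hode := congrArg (eval (q u)) (aperySum_differential_equation N)
      simp only [eval_add, eval_sub, eval_mul, eval_pow, eval_X, eval_C, eval_ofNat,
        eval_one] at hode
      rw [← hode]
      simp only [Function.comp_apply]
      linear_combination (aperySum N).derivative.derivative.eval (q u) * henergy u
    refine abs_sub_mul_sq_div_two_le
      (fun u => ((aperySum N).hasDerivAt (q u)).comp u (hq u)) hderiv2
      (by simp [h0, eval_aperySum]) (by simp [h0']) fun u hu => ?_
    calc |c * (1 - 1 / N.centralBinom * q u ^ N) - c|
        = |-(c * (q u ^ N / N.centralBinom))| := by congr 1; ring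
      _ = |c| * (|q u| ^ N / N.centralBinom) := by
        rw [abs_neg, abs_mul, abs_div, abs_pow, Nat.abs_cast]
      _ ≤ |c| * (r ^ N / N.centralBinom) := by gcongr; exact hbound u hu
  have hzero := ((summable_pow_div_centralBinom hr0 hr).tendsto_atTop_zero.const_mul |c|).mul_const
    (T ^ 2)
  rw [mul_zero, zero_mul] at hzero
  simp only [← eval_aperySum]
  exact tendsto_iff_norm_sub_tendsto_zero.2 (squeeze_zero (fun _ => norm_nonneg _) herror hzero)

lemma hasSum_aperyCoeff_arcsin {x : ℝ} (hx : |x| < 1) :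
    HasSum (fun n => aperyCoeff n * (4 * x ^ 2) ^ (n + 1)) (2 * arcsin x ^ 2) := by
  have hsin : sin (arcsin x) = x := sin_arcsin (neg_le_of_abs_le hx.le) (le_of_abs_le hx.le)
  have h := hasSum_aperyCoeff_mul_pow_comp (q := fun u => 4 * sin u ^ 2)
    (q' := fun u => 8 * (sin u * cos u)) (c := 4) (r := 4 * x ^ 2) (T := arcsin x)
    (fun u => (((hasDerivAt_sin u).pow 2).const_mul 4).congr_deriv
      (by simp only [Nat.cast_ofNat, Nat.add_one_sub_one, pow_one]; ring))
    (fun u => (((hasDerivAt_sin u).mul (hasDerivAt_cos u)).const_mul 8).congr_deriv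
      (by linear_combination 8 * sin_sq_add_cos_sq u))
    (fun u => by linear_combination 64 * sin u ^ 2 * sin_sq_add_cos_sq u) (by simp)
    (by linarith [(sq_lt_one_iff_abs_lt_one x).2 hx]) fun u hu => ?_
  · convert h using 1
    · simp only [hsin]
    · ring
  · have hsub : uIcc 0 (arcsin x) ⊆ Icc (-(π / 2)) (π / 2) :=
      uIcc_subset_Icc ⟨by linarith [pi_pos], by linarith [pi_pos]⟩ (arcsin_mem_Icc x)
    have hmem := (strictMonoOn_sin.monotoneOn.mono hsub).mapsTo_uIcc hu
    rw [sin_zero, hsin] at hmem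
    have habs : |sin u| ≤ |x| := by simpa using abs_sub_left_of_mem_uIcc hmem
    simpa [abs_mul] using sq_le_sq.2 habs

lemma hasSum_aperyCoeff_arsinh {x : ℝ} (hx : |x| < 1) :
    HasSum (fun n => aperyCoeff n * (-(4 * x ^ 2)) ^ (n + 1)) (-(2 * arsinh x ^ 2)) := by
  have h := hasSum_aperyCoeff_mul_pow_comp (q := fun u => -(4 * sinh u ^ 2))
    (q' := fun u => -(8 * (sinh u * cosh u))) (c := -4) (r := 4 * x ^ 2) (T := arsinh x)
    (fun u => (((hasDerivAt_sinh u).pow 2).const_mul 4).neg.congr_deriv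
      (by simp only [Nat.cast_ofNat, Nat.add_one_sub_one, pow_one]; ring))
    (fun u => (((hasDerivAt_sinh u).mul (hasDerivAt_cosh u)).const_mul 8).neg.congr_deriv
      (by linear_combination -8 * cosh_sq u))
    (fun u => by linear_combination 64 * sinh u ^ 2 * cosh_sq u) (by simp)
    (by linarith [(sq_lt_one_iff_abs_lt_one x).2 hx]) fun u hu => ?_
  · convert h using 1
    · simp only [sinh_arsinh]
    · ring
  · have hmem := sinh_strictMono.monotone.mapsTo_uIcc hu
    rw [sinh_zero, sinh_arsinh] at hmem
    have habs : |sinh u| ≤ |x| := by simpa using abs_sub_left_of_mem_uIcc hmem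
    simpa [abs_mul] using sq_le_sq.2 habs

lemma hasSum_aperyCoeff : HasSum aperyCoeff (π ^ 2 / 18) := by
  have harcsin : arcsin (1 / 2) = π / 6 :=
    arcsin_eq_of_sin_eq sin_pi_div_six ⟨by linarith [pi_pos], by linarith [pi_pos]⟩
  convert hasSum_aperyCoeff_arcsin (x := 1 / 2) (by norm_num [abs_of_pos]) using 1
  · norm_num
  · rw [harcsin]
    ring

/-! ### Integral representation of the terms -/

lemma intervalIntegrable_pow_mul_dlogForm_one_add_X (n k : ℕ) :
    IntervalIntegrable (fun s => s ^ n * dlogForm k (1 + X) s) volume 0 1 :=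
  ((isPrimitivable_dlogForm_one_add_X k).intervalIntegrable one_pos).continuousOn_mul
    (by fun_prop)

lemma integral_pow_mul_dlogForm_one_add_X (n k : ℕ) :
    ∫ s in (0 : ℝ)..1, s ^ n * dlogForm k (1 + X) s =
      (-1) ^ n * (dlogIntegral k (1 + X) 1 + (-1) ^ k * k.factorial * A (k + 1) n) := by
  induction n with
  | zero => simp [A, dlogIntegral]
  | succ n ih =>
    have hadd : (∫ s in (0 : ℝ)..1, s ^ n * dlogForm k (1 + X) s) +
        ∫ s in (0 : ℝ)..1, s ^ (n + 1) * dlogForm k (1 + X) s =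
          (-1) ^ k * k.factorial / (n + 1) ^ (k + 1) := by
      rw [← integral_pow_mul_log_pow, ← intervalIntegral.integral_add
        (intervalIntegrable_pow_mul_dlogForm_one_add_X n k)
        (intervalIntegrable_pow_mul_dlogForm_one_add_X (n + 1) k)]
      refine intervalIntegral.integral_congr fun s hs => ?_
      rw [uIcc_of_le zero_le_one] at hs
      have hne : 1 + s ≠ 0 := by linarith [hs.1]
      simp only [dlogForm, derivative_add, derivative_one, derivative_X, zero_add, eval_add,
        eval_one, eval_X]
      field_simp
      ring
    have hA : A (k + 1) (n + 1) = A (k + 1) n + (-1) ^ (n + 1) / ((n : ℝ) + 1) ^ (k + 1) :=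
      Finset.sum_range_succ _ _
    have hsign : (-1 : ℝ) ^ n * (-1) ^ n = 1 := by rw [← mul_pow]; norm_num
    rw [ih] at hadd
    rw [hA, pow_succ]
    linear_combination hadd - (-1) ^ k * k.factorial / ((n : ℝ) + 1) ^ (k + 1) * hsign

/-- The integrand on `(0, 1)` representing the term of index `m = n + 1` of the series, up to
an `n`-independent multiple of `aperyCoeff n`. -/
noncomputable def aperyTerm (n : ℕ) (s : ℝ) : ℝ :=
  aperyCoeff n * (-1) ^ n * (12 * (s ^ n * dlogForm 2 (1 + X) s) - 7 / 2 * (s ^ n * log s ^ 2))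

lemma intervalIntegrable_aperyTerm (n : ℕ) : IntervalIntegrable (aperyTerm n) volume 0 1 :=
  (((intervalIntegrable_pow_mul_dlogForm_one_add_X n 2).const_mul 12).sub
    ((intervalIntegrable_pow_mul_log_pow n 2).const_mul (7 / 2))).const_mul _

lemma integral_aperyTerm (n : ℕ) :
    ∫ s in (0 : ℝ)..1, aperyTerm n s =
      aperyCoeff n * (24 * A 3 n + 7 * (-1) ^ (n + 1) / (n + 1) ^ 3) +
        12 * dlogIntegral 2 (1 + X) 1 * aperyCoeff n := by
  have hsign : (-1 : ℝ) ^ n * (-1) ^ n = 1 := by rw [← mul_pow]; norm_num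
  simp only [aperyTerm]
  rw [intervalIntegral.integral_const_mul, intervalIntegral.integral_sub
    ((intervalIntegrable_pow_mul_dlogForm_one_add_X n 2).const_mul 12)
    ((intervalIntegrable_pow_mul_log_pow n 2).const_mul (7 / 2)),
    intervalIntegral.integral_const_mul, intervalIntegral.integral_const_mul,
    integral_pow_mul_dlogForm_one_add_X, integral_pow_mul_log_pow, Nat.factorial_two, pow_succ]
  push_cast
  linear_combination
    (24 * aperyCoeff n * A 3 n + 12 * aperyCoeff n * dlogIntegral 2 (1 + X) 1) * hsign

lemma aperyTerm_eq_mul_neg_pow (n : ℕ) {s : ℝ} (hs : 0 < s) :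
    aperyTerm n s =
      -(log s ^ 2 * (12 / (1 + s) - 7 / 2) / s) * (aperyCoeff n * (-s) ^ (n + 1)) := by
  have hne : 1 + s ≠ 0 := by positivity
  simp only [aperyTerm, dlogForm, derivative_add, derivative_one, derivative_X, zero_add, eval_add,
    eval_one, eval_X]
  rw [neg_pow s, pow_succ (-1), pow_succ s]
  field_simp

lemma hasSum_aperyTerm {s : ℝ} (hs : s ∈ Ioc (0 : ℝ) 1) :
    HasSum (fun n => aperyTerm n s) (arsinhForm s) := by
  have hs0 : 0 < s := hs.1
  have hne : 1 + s ≠ 0 := by positivity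
  have hsqrt : 4 * (√s / 2) ^ 2 = s := by
    rw [div_pow, sq_sqrt hs0.le]
    ring
  have hlt : |√s / 2| < 1 := by
    rw [← sq_lt_one_iff_abs_lt_one]
    linarith [hs.2]
  have h := hasSum_aperyCoeff_arsinh hlt
  rw [hsqrt] at h
  simp only [aperyTerm_eq_mul_neg_pow _ hs0]
  have hform : arsinhForm s =
      -(log s ^ 2 * (12 / (1 + s) - 7 / 2) / s) * -(2 * arsinh (√s / 2) ^ 2) := by
    rw [arsinhForm]
    field_simp
    ring
  rw [hform]
  exact h.mul_left _

lemma norm_aperyTerm_le (n : ℕ) {s : ℝ} (hs : s ∈ Ioc (0 : ℝ) 1) :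
    ‖aperyTerm n s‖ ≤ aperyCoeff n * (17 / 2 * log s ^ 2) := by
  have hs0 : 0 < s := hs.1
  have hfactor : |12 / (1 + s) - 7 / 2| ≤ 17 / 2 := by
    have hle : 12 / (1 + s) ≤ 12 := div_le_self (by norm_num) (by linarith)
    have hpos : 0 < 12 / (1 + s) := by positivity
    rw [abs_le]
    constructor <;> linarith
  have hpow : s ^ n ≤ 1 := pow_le_one₀ hs0.le hs.2
  calc ‖aperyTerm n s‖
      = aperyCoeff n * log s ^ 2 * (|12 / (1 + s) - 7 / 2| * s ^ n) := by
        rw [aperyTerm_eq_mul_neg_pow n hs0, norm_eq_abs, abs_mul, abs_neg, abs_div, abs_mul,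
          abs_mul, abs_pow, abs_pow, sq_abs, abs_neg, abs_of_pos hs0,
          abs_of_nonneg (aperyCoeff_nonneg n)]
        field_simp
        ring
    _ ≤ aperyCoeff n * log s ^ 2 * (17 / 2 * 1) := by
        have := aperyCoeff_nonneg n
        gcongr
    _ = aperyCoeff n * (17 / 2 * log s ^ 2) := by ring

lemma hasSum_integral_aperyTerm :
    HasSum (fun n => ∫ s in (0 : ℝ)..1, aperyTerm n s) (7 * zeta 5) := by
  have hmem {p : ℝ → Prop} (h : ∀ s ∈ Ioc (0 : ℝ) 1, p s) :
      ∀ᵐ s, s ∈ uIoc (0 : ℝ) 1 → p s :=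
    .of_forall fun s hs => h s (by rwa [uIoc_of_le zero_le_one] at hs)
  have hlog : IntervalIntegrable (fun s => 17 / 2 * log s ^ 2) volume 0 1 := by
    simpa using (intervalIntegrable_pow_mul_log_pow 0 2).const_mul (17 / 2)
  rw [← integral_arsinhForm]
  refine intervalIntegral.hasSum_integral_of_dominated_convergence
    (fun n s => aperyCoeff n * (17 / 2 * log s ^ 2))
    (fun n => ?_) (fun n => hmem fun s => norm_aperyTerm_le n)
    (hmem fun s _ => hasSum_aperyCoeff.summable.mul_right _) ?_ (hmem fun s => hasSum_aperyTerm)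
  · rw [uIoc_of_le zero_le_one]
    exact (intervalIntegrable_aperyTerm n).1.aestronglyMeasurable
  · simpa only [tsum_mul_right] using hlog.const_mul _

end AperyLike

theorem stmt_10 :
    Tendsto (fun N => ∑ n ∈ Finset.range N,
      1 / (((n:ℝ)+1)^2 * ((2*(n+1)).choose (n+1) : ℝ)) *
        (24 * A 3 n + 7 * (-1:ℝ)^(n+1) / ((n:ℝ)+1)^3))
      atTop (𝓝 (7 * zeta 5 - Real.pi^2 * zeta 3)) := by
  have h := (AperyLike.hasSum_integral_aperyTerm.sub
    (AperyLike.hasSum_aperyCoeff.mul_left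
      (12 * AperyLike.dlogIntegral 2 (1 + Polynomial.X) 1))).tendsto_sum_nat
  have hvalue : 12 * AperyLike.dlogIntegral 2 (1 + Polynomial.X) 1 * (Real.pi ^ 2 / 18) =
      Real.pi ^ 2 * zeta 3 := by
    rw [AperyLike.dlogIntegral_one_add_X_one le_rfl, Nat.factorial_two]
    push_cast
    ring
  rw [hvalue] at h
  refine h.congr fun N => Finset.sum_congr rfl fun n _ => ?_
  rw [AperyLike.integral_aperyTerm, add_sub_cancel_right, AperyLike.aperyCoeff,
    Nat.centralBinom_eq_two_mul_choose]
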